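/- arXiv:1909.06568 — 2 statements merged into one kernel-verified Lean document; each statement's English description precedes it below -/
import Mathlib

section
/- Let ω = ω(n) be any function tending to infinity as n → ∞, and suppose d = p(n−1) ≥ ω log n. Then asymptotically almost surely the random graph G = G(n,p) has the following property: every set S ⊆ V(G) of cardinality s = |S| ≤ n/(dω) satisfies |N(S)| = sd(1 + O(ω^{-1/2})) ∼ sd, where the constant implicit in the O(·) does not depend on the choice of S. -/
open Finset Filter Real
open scoped Classical

namespace PZF

variable {V : Type*} [Fintype V] [DecidableEq V]

/-- The closed degree of `u` into the set `B`, i.e. `|N[u] ∩ B|`. -/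
noncomputable def closedDegIn (G : SimpleGraph V) (B : Finset V) (u : V) : ℕ :=
  ((insert u (G.neighborSet u)) ∩ (B : Set V)).ncard

/-- The degree of `u` in `G`. -/
noncomputable def deg (G : SimpleGraph V) (u : V) : ℕ :=
  (G.neighborSet u).ncard

/-- The probability that the blue vertex `u` forces its white neighbour `v` in one round of
probabilistic zero forcing, when the current blue set is `B`: it equals `|N[u] ∩ B| / deg u`
when `u` is blue, `v` is a white neighbour of `u`, and `0` otherwise. -/
noncomputable def edgeForceProb (G : SimpleGraph V) (B : Finset V) (u v : V) : ℝ :=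
  if G.Adj u v ∧ u ∈ B ∧ v ∉ B then (closedDegIn G B u : ℝ) / (deg G u : ℝ) else 0

/-- Given per-ordered-pair forcing probabilities `q u v` (each attempt independent), the
probability that one round starting from the blue set `B` produces exactly the blue set `B'`. -/
noncomputable def stepOfQ (q : V → V → ℝ) (B B' : Finset V) : ℝ :=
  if B ⊆ B' then
    (∏ v ∈ B' \ B, (1 - ∏ u ∈ B, (1 - q u v))) * ∏ v ∈ B'ᶜ, ∏ u ∈ B, (1 - q u v)
  else 0

/-- The transition rule of standard probabilistic zero forcing, as a function of the history
(the list of blue sets so far; only the current blue set matters). -/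
noncomputable def stdStep (G : SimpleGraph V) (hist : List (Finset V)) (B' : Finset V) : ℝ :=
  stepOfQ (edgeForceProb G (hist.getLastD ∅)) (hist.getLastD ∅) B'

/-- Probability of a given future trajectory, given the history so far. -/
noncomputable def seqProbAux (step : List (Finset V) → Finset V → ℝ) :
    List (Finset V) → List (Finset V) → ℝ
  | _, [] => 1
  | hist, B :: rest => step hist B * seqProbAux step (hist ++ [B]) rest

/-- The probability that, running the process given by the transition rule `step` from the
initial blue set `S` for `ℓ` rounds, the resulting trajectory (including the initial set)
satisfies the predicate `E`. -/
noncomputable def trajEventProb (step : List (Finset V) → Finset V → ℝ) (S : Finset V)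
    (ℓ : ℕ) (E : List (Finset V) → Prop) : ℝ :=
  ∑ f : Fin ℓ → Finset V,
    if E (S :: List.ofFn f) then seqProbAux step [S] (List.ofFn f) else 0

/-- `P(A(S,T,ℓ))`: the probability that, starting probabilistic zero forcing from the blue
set `S`, after `ℓ` rounds every vertex of `T` is blue. -/
noncomputable def probForced (G : SimpleGraph V) (S T : Finset V) (ℓ : ℕ) : ℝ :=
  trajEventProb (stdStep G) S ℓ fun traj => T ⊆ traj.getLastD ∅

/-- `P(pt_pzf(G,S) ≤ ℓ)`: the probability that all vertices are blue after `ℓ` rounds. -/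
noncomputable def probAllBlue (G : SimpleGraph V) (S : Finset V) (ℓ : ℕ) : ℝ :=
  probForced G S Finset.univ ℓ

/-- The probability of a fixed graph `G` under the Erdős–Rényi measure `G(n,p)`. -/
noncomputable def erProb (n : ℕ) (p : ℝ) (G : SimpleGraph (Fin n)) : ℝ :=
  p ^ G.edgeSet.ncard * (1 - p) ^ (n.choose 2 - G.edgeSet.ncard)

/-- The probability that `G(n,p)` satisfies the property `E`. -/
noncomputable def graphProb (n : ℕ) (p : ℝ) (E : SimpleGraph (Fin n) → Prop) : ℝ :=
  ∑ G : SimpleGraph (Fin n), if E G then erProb n p G else 0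

/-- `P(pt_pzf(G(n,p), v) ≤ ℓ)`: the joint probability (over the random graph and the forcing
randomness) that probabilistic zero forcing started at `{v}` turns all of `G(n,p)` blue
within `ℓ` rounds. -/
noncomputable def prPZFwithin (n : ℕ) (p : ℝ) (v : Fin n) (ℓ : ℕ) : ℝ :=
  ∑ G : SimpleGraph (Fin n), erProb n p G * probAllBlue G {v} ℓ

/-- The external neighbourhood `N(S) = (⋃ v ∈ S, N(v)) \\ S` of a finset of vertices. -/
noncomputable def extN (G : SimpleGraph V) (S : Finset V) : Finset V :=
  Finset.univ.filter fun v => v ∉ S ∧ ∃ u ∈ S, G.Adj u v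

end PZF

/-! The variable `|N(S)|` is studied through `z ^ |N(S)|`, a product over `v ∉ S` of
`(1 - z) * 1[v has no neighbour in S] + z`. Expanding it over the sets `T` of vertices chosen to
miss `S`, the event that no edge joins `S` to `T` has probability `(1 - p) ^ (|S| |T|)`, so that
`|N(S)|` has the generating function of a binomial variable with `n - s` trials of success
probability `1 - (1 - p) ^ s`. Such a variable is sub-Poisson, and when `s ≤ n / (d ω)` its mean
lies between `s d (1 - 4 / ω)` and `s d`. Chernoff's bound with parameter `ω ^ (-1 / 2)` shows that
a deviation by more than `4 s d ω ^ (-1 / 2)` has probability at most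
`2 exp (-2 s d / ω) ≤ 2 n ^ (-2 s)`, which is summable over all nonempty `S` with sum `O(1 / n)`.
-/

namespace PZF

open MeasureTheory ProbabilityTheory SimpleGraph unitInterval

section Probability

/-- The moment generating function of `X` is dominated by that of a Poisson variable of mean `μ`,
the analogue of `ProbabilityTheory.HasSubgaussianMGF` that yields Chernoff bounds for counts. -/
structure HasSubPoissonMGF {Ω : Type*} {mΩ : MeasurableSpace Ω} (X : Ω → ℝ) (μ : ℝ)
    (P : Measure Ω) : Prop where
  integrable_exp_mul : ∀ t, Integrable (fun ω ↦ exp (t * X ω)) P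
  mgf_le : ∀ t, mgf X P t ≤ exp ((exp t - 1) * μ)

namespace HasSubPoissonMGF

variable {Ω : Type*} {mΩ : MeasurableSpace Ω} {P : Measure Ω} {X : Ω → ℝ} {μ m ε : ℝ}

lemma measureReal_ge_le [IsFiniteMeasure P] (hX : HasSubPoissonMGF X μ P)
    (hm : 0 ≤ m) (hμ : μ ≤ m) (hε₀ : 0 ≤ ε) (hε₁ : ε ≤ 1) (C : ℝ) :
    P.real {ω | m + C * (ε * m) ≤ X ω} ≤ exp (-((C - 1) * (ε ^ 2 * m))) := by
  have hexp : exp ε - 1 - ε ≤ ε ^ 2 :=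
    (abs_le.1 (abs_exp_sub_one_sub_id_le (by rwa [abs_of_nonneg hε₀]))).2
  have hcgf : (exp ε - 1) * μ ≤ (ε + ε ^ 2) * m :=
    calc (exp ε - 1) * μ ≤ (exp ε - 1) * m := by
          gcongr; exact sub_nonneg.2 (one_le_exp hε₀)
      _ ≤ (ε + ε ^ 2) * m := by gcongr; linarith
  calc P.real {ω | m + C * (ε * m) ≤ X ω}
      ≤ exp (-ε * (m + C * (ε * m))) * mgf X P ε :=
        measure_ge_le_exp_mul_mgf _ hε₀ (hX.integrable_exp_mul ε)
    _ ≤ exp (-ε * (m + C * (ε * m))) * exp ((exp ε - 1) * μ) := by gcongr; exact hX.mgf_le ε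
    _ = exp (-ε * (m + C * (ε * m)) + (exp ε - 1) * μ) := (exp_add _ _).symm
    _ ≤ exp (-((C - 1) * (ε ^ 2 * m))) := exp_le_exp.2 (by linarith)

lemma measureReal_le_le [IsFiniteMeasure P] (hX : HasSubPoissonMGF X μ P)
    (hm : 0 ≤ m) (hμ₀ : 0 ≤ μ) (hμ : m * (1 - 4 * ε ^ 2) ≤ μ)
    (hε₀ : 0 ≤ ε) (hε₁ : ε ≤ 1) (C : ℝ) :
    P.real {ω | X ω ≤ m - C * (ε * m)} ≤ exp (-((C - 2) * (ε ^ 2 * m))) := by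
  have hexp : exp (-ε) - 1 - -ε ≤ (-ε) ^ 2 :=
    (abs_le.1 (abs_exp_sub_one_sub_id_le (by rwa [abs_neg, abs_of_nonneg hε₀]))).2
  have hcgf : (exp (-ε) - 1) * μ ≤ -(ε - ε ^ 2) * (m * (1 - 4 * ε ^ 2)) :=
    calc (exp (-ε) - 1) * μ ≤ -(ε - ε ^ 2) * μ := by gcongr; linarith
      _ ≤ -(ε - ε ^ 2) * (m * (1 - 4 * ε ^ 2)) := mul_le_mul_of_nonpos_left hμ (by nlinarith)
  -- The `4` in `hμ` is the largest constant for which the error terms form a square.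
  have hsq : 0 ≤ ε ^ 2 * m * (2 * ε - 1) ^ 2 := by positivity
  calc P.real {ω | X ω ≤ m - C * (ε * m)}
      ≤ exp (-(-ε) * (m - C * (ε * m))) * mgf X P (-ε) :=
        measure_le_le_exp_mul_mgf _ (neg_nonpos.2 hε₀) (hX.integrable_exp_mul (-ε))
    _ ≤ exp (-(-ε) * (m - C * (ε * m))) * exp ((exp (-ε) - 1) * μ) := by
        gcongr; exact hX.mgf_le (-ε)
    _ = exp (-(-ε) * (m - C * (ε * m)) + (exp (-ε) - 1) * μ) := (exp_add _ _).symm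
    _ ≤ exp (-((C - 2) * (ε ^ 2 * m))) := exp_le_exp.2 (by linarith)

lemma measureReal_lt_abs_sub_le [IsFiniteMeasure P] (hX : HasSubPoissonMGF X μ P)
    (hμ₀ : 0 ≤ μ) (hμ_le : μ ≤ m) (hle_μ : m * (1 - 4 * ε ^ 2) ≤ μ)
    (hε₀ : 0 ≤ ε) (hε₁ : ε ≤ 1) (C : ℝ) :
    P.real {ω | C * (ε * m) < |X ω - m|} ≤ 2 * exp (-((C - 2) * (ε ^ 2 * m))) := by
  have hm : 0 ≤ m := hμ₀.trans hμ_le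
  have hsub : {ω | C * (ε * m) < |X ω - m|} ⊆
      {ω | m + C * (ε * m) ≤ X ω} ∪ {ω | X ω ≤ m - C * (ε * m)} := by
    intro ω hω
    rcases lt_abs.1 (Set.mem_ofPred.1 hω) with h | h
    · exact .inl (by simp only [Set.mem_ofPred_eq]; linarith)
    · exact .inr (by simp only [Set.mem_ofPred_eq]; linarith)
  calc P.real {ω | C * (ε * m) < |X ω - m|}
      ≤ P.real {ω | m + C * (ε * m) ≤ X ω} + P.real {ω | X ω ≤ m - C * (ε * m)} :=
        (measureReal_mono hsub).trans (measureReal_union_le _ _)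
    _ ≤ exp (-((C - 1) * (ε ^ 2 * m))) + exp (-((C - 2) * (ε ^ 2 * m))) :=
        add_le_add (hX.measureReal_ge_le hm hμ_le hε₀ hε₁ C)
          (hX.measureReal_le_le hm hμ₀ hle_μ hε₀ hε₁ C)
    _ ≤ 2 * exp (-((C - 2) * (ε ^ 2 * m))) := by
        have : exp (-((C - 1) * (ε ^ 2 * m))) ≤ exp (-((C - 2) * (ε ^ 2 * m))) := by
          gcongr; linarith
        linarith

end HasSubPoissonMGF

lemma setBernoulli_real_disjoint {ι : Type*} {u : Set ι} (p : I) {A : Finset ι}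
    (hA : (A : Set ι) ⊆ u) :
    setBer(u, p).real {s | Disjoint s ↑A} = (1 - p : ℝ) ^ #A := by
  have hpre : (fun q : ι → Prop ↦ {i | q i}) ⁻¹' {s | Disjoint s ↑A} =
      Set.pi A fun _ ↦ {False} := by
    ext q
    simp [Set.disjoint_right]
  have hcoord : ∀ i ∈ A, (unitInterval.toNNReal p • Measure.dirac (i ∈ u) +
      unitInterval.toNNReal (σ p) • Measure.dirac False) {False} =
        (unitInterval.toNNReal (σ p) : ENNReal) := by
    intro i hi
    have hu : i ∈ u := hA hi
    simp only [Measure.add_apply, Measure.smul_apply, ENNReal.smul_def, Measure.dirac_apply, hu]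
    simp
  rw [measureReal_def, setBernoulli_apply', hpre,
    Measure.infinitePi_pi _ fun _ _ ↦ MeasurableSet.of_discrete, prod_congr rfl hcoord]
  simp

end Probability

section BinomialRandomGraph

variable {V : Type*}

instance discreteMeasurableSpace_simpleGraph [Finite V] :
    DiscreteMeasurableSpace (SimpleGraph V) where
  forall_measurableSet s := by
    rw [← Set.preimage_image_eq s edgeSet_injective]
    exact measurable_edgeSet .of_discrete

lemma binomialRandom_real_disjoint [Finite V] (p : I) (H : SimpleGraph V) :
    G(V, p).real {G | Disjoint G H} = (1 - p : ℝ) ^ H.edgeSet.ncard := by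
  have hfin : H.edgeSet.Finite := Set.toFinite _
  have hsub : (hfin.toFinset : Set (Sym2 V)) ⊆ Sym2.diagSetᶜ := by simp
  rw [binomialRandom_eq_map, map_measureReal_apply measurable_fromEdgeSet .of_discrete,
    Set.ncard_eq_toFinset_card _ hfin, ← setBernoulli_real_disjoint p hsub]
  simp

lemma graphProb_eq_binomialRandom_real (n : ℕ) (p : I) (E : SimpleGraph (Fin n) → Prop) :
    graphProb n p E = G(Fin n, p).real {G | E G} := by
  have hsingle (G : SimpleGraph (Fin n)) : G(Fin n, p).real {G} = erProb n p G := by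
    simp [measureReal_def, erProb]
  have hset : {G | E G} = ((univ.filter E : Finset _) : Set (SimpleGraph (Fin n))) := by simp
  rw [hset, ← sum_measureReal_singleton]
  simp only [hsingle, graphProb, sum_filter]

end BinomialRandomGraph

section Neighborhood

variable {V : Type*}

lemma ncard_edgeSet_top_between {S T : Set V} (h : Disjoint S T) :
    ((⊤ : SimpleGraph V).between S T).edgeSet.ncard = S.ncard * T.ncard := by
  have himage : ((⊤ : SimpleGraph V).between S T).edgeSet =
      (fun e : V × V ↦ s(e.1, e.2)) '' S ×ˢ T := by
    ext e
    induction e with | h u v => ?_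
    simp only [mem_edgeSet, between_adj, top_adj, Set.mem_image, Set.mem_prod, Prod.exists,
      Sym2.eq_iff]
    grind
  rw [himage, Set.InjOn.ncard_image, Set.ncard_prod]
  rintro ⟨u, v⟩ ⟨hu, -⟩ ⟨u', v'⟩ ⟨-, hv'⟩ heq
  grind [Sym2.eq_iff]

lemma disjoint_top_between_iff {G : SimpleGraph V} {S T : Set V} :
    Disjoint G ((⊤ : SimpleGraph V).between S T) ↔ ∀ v ∈ T, ∀ u ∈ S, ¬ G.Adj u v := by
  simp only [SimpleGraph.disjoint_left, between_adj, top_adj]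
  grind [SimpleGraph.Adj.ne, SimpleGraph.Adj.symm]

variable [Fintype V] [DecidableEq V]

lemma pow_card_extN (G : SimpleGraph V) (S : Finset V) (z : ℝ) :
    z ^ #(extN G S) = ∑ T ∈ Sᶜ.powerset, (1 - z) ^ #T * z ^ (#Sᶜ - #T) *
      {H : SimpleGraph V | Disjoint H ((⊤ : SimpleGraph V).between S T)}.indicator 1 G := by
  have hextN : extN G S = Sᶜ.filter fun v ↦ ∃ u ∈ S, G.Adj u v := by
    ext v
    simp [extN]
  calc z ^ #(extN G S)
      = ∏ v ∈ Sᶜ, ((1 - z) * (if ∀ u ∈ S, ¬ G.Adj u v then 1 else 0) + z) := by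
        rw [hextN, ← prod_const, prod_filter]
        refine prod_congr rfl fun v _ ↦ ?_
        split_ifs <;> grind
    _ = ∑ T ∈ Sᶜ.powerset, (1 - z) ^ #T * z ^ (#Sᶜ - #T) *
          {H : SimpleGraph V | Disjoint H ((⊤ : SimpleGraph V).between S T)}.indicator 1 G := by
        rw [prod_add]
        refine sum_congr rfl fun T hT ↦ ?_
        rw [prod_const, card_sdiff_of_subset (mem_powerset.1 hT), prod_mul_distrib, prod_const,
          prod_boole, Set.indicator_apply]
        simp only [Set.mem_ofPred_eq, disjoint_top_between_iff, mem_coe, Pi.one_apply]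
        ring_nf

lemma integral_pow_card_extN (p : I) (S : Finset V) (z : ℝ) :
    ∫ G, z ^ #(extN G S) ∂G(V, p) = ((1 - z) * (1 - p) ^ #S + z) ^ #Sᶜ := by
  simp_rw [pow_card_extN]
  rw [integral_finsetSum _ fun _ _ ↦ .of_finite, ← sum_pow_mul_eq_add_pow]
  refine sum_congr rfl fun T hT ↦ ?_
  have hdisj : Disjoint S T := disjoint_left.2 fun v hS hT' ↦ mem_compl.1 (mem_powerset.1 hT hT') hS
  rw [integral_const_mul, integral_indicator_one .of_discrete, binomialRandom_real_disjoint,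
    ncard_edgeSet_top_between (disjoint_coe.2 hdisj), Set.ncard_coe_finset,
    Set.ncard_coe_finset, mul_pow, pow_mul]
  ring

/-- The mean `(n - s) (1 - (1 - p) ^ s)` of `|N(S)|` in `G(n, p)` for a set `S` of `s` vertices:
each of the other `n - s` vertices misses `S` with probability `(1 - p) ^ s`. -/
noncomputable def meanExtN (n : ℝ) (s : ℕ) (p : ℝ) : ℝ := (n - s) * (1 - (1 - p) ^ s)

lemma hasSubPoissonMGF_card_extN (p : I) (S : Finset V) :
    HasSubPoissonMGF (fun G ↦ (#(extN G S) : ℝ)) (meanExtN (Fintype.card V) #S p) G(V, p) where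
  integrable_exp_mul _ := .of_finite
  mgf_le t := by
    have hq₁ : (1 - p : ℝ) ^ #S ≤ 1 := pow_le_one₀ (sub_nonneg.2 p.2.2) (by linarith [p.2.1])
    have hq₀ : 0 ≤ (1 - p : ℝ) ^ #S := pow_nonneg (sub_nonneg.2 p.2.2) _
    have hcompl : (#Sᶜ : ℝ) = Fintype.card V - #S := by
      rw [card_compl, Nat.cast_sub (card_le_univ S)]
    calc mgf (fun G ↦ (#(extN G S) : ℝ)) G(V, p) t
        = ((1 - exp t) * (1 - p) ^ #S + exp t) ^ #Sᶜ := by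
          rw [← integral_pow_card_extN, mgf]
          simp_rw [← exp_nat_mul, mul_comm t]
      _ ≤ exp ((exp t - 1) * (1 - (1 - p) ^ #S)) ^ #Sᶜ := by
          gcongr
          · nlinarith [exp_pos t]
          · linarith [add_one_le_exp ((exp t - 1) * (1 - (1 - p : ℝ) ^ #S))]
      _ = exp ((exp t - 1) * meanExtN (Fintype.card V) #S p) := by
          rw [← exp_nat_mul, hcompl, meanExtN]
          ring_nf

end Neighborhood

section Mean

variable {n p : ℝ} {s : ℕ}

lemma one_sub_one_sub_pow_le (hp : p ≤ 1) (s : ℕ) : 1 - (1 - p) ^ s ≤ s * p := by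
  have h := one_add_mul_le_pow (a := -p) (by linarith) s
  rw [← sub_eq_add_neg] at h
  linarith

lemma sub_sq_le_one_sub_one_sub_pow (hp₀ : 0 ≤ p) (hp₁ : p ≤ 1) (s : ℕ) :
    s * p - (s * p) ^ 2 ≤ 1 - (1 - p) ^ s := by
  have hx : 0 ≤ s * p := by positivity
  have hmul : (1 - p) ^ s * (1 + s * p) ≤ 1 :=
    calc (1 - p) ^ s * (1 + s * p) ≤ (1 - p) ^ s * (1 + p) ^ s := by
          gcongr; exact one_add_mul_le_pow (by linarith) s
      _ = (1 - p ^ 2) ^ s := by rw [← mul_pow]; ring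
      _ ≤ 1 := pow_le_one₀ (by nlinarith) (by nlinarith)
  refine le_of_mul_le_mul_right ?_ (by linarith : 0 < 1 + s * p)
  nlinarith [pow_nonneg hx 3]

lemma meanExtN_nonneg (hp₀ : 0 ≤ p) (hp₁ : p ≤ 1) (hsn : s ≤ n) : 0 ≤ meanExtN n s p :=
  mul_nonneg (sub_nonneg.2 hsn)
    (sub_nonneg.2 (pow_le_one₀ (sub_nonneg.2 hp₁) (by linarith)))

lemma meanExtN_le (hp₀ : 0 ≤ p) (hp₁ : p ≤ 1) (hs : 1 ≤ s) (hsn : s ≤ n) :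
    meanExtN n s p ≤ s * (p * (n - 1)) := by
  have hs' : (1 : ℝ) ≤ s := by exact_mod_cast hs
  calc (n - s) * (1 - (1 - p) ^ s) ≤ (n - s) * (s * p) := by
        exact mul_le_mul_of_nonneg_left (one_sub_one_sub_pow_le hp₁ s) (sub_nonneg.2 hsn)
    _ ≤ (n - 1) * (s * p) := by gcongr
    _ = s * (p * (n - 1)) := by ring

lemma le_meanExtN (hp₀ : 0 ≤ p) (hp₁ : p ≤ 1) (hs : 1 ≤ s) (hsn : s ≤ n) :
    s * (p * (n - 1)) - s * (s * p) - (n - 1) * (s * p) ^ 2 ≤ meanExtN n s p := by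
  have hs' : (1 : ℝ) ≤ s := by exact_mod_cast hs
  have hx : 0 ≤ s * p := by positivity
  calc s * (p * (n - 1)) - s * (s * p) - (n - 1) * (s * p) ^ 2
      ≤ (n - s) * (s * p - (s * p) ^ 2) := by nlinarith [sq_nonneg (s * p)]
    _ ≤ (n - s) * (1 - (1 - p) ^ s) := by
        exact mul_le_mul_of_nonneg_left (sub_sq_le_one_sub_one_sub_pow hp₀ hp₁ s)
          (sub_nonneg.2 hsn)

lemma mul_one_sub_le_meanExtN {w : ℝ} (hp₀ : 0 ≤ p) (hp₁ : p ≤ 1) (hs : 1 ≤ s) (hsn : s ≤ n)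
    (hw : 0 < w) (hd : 1 ≤ p * (n - 1)) (hsw : s ≤ n / (p * (n - 1) * w)) :
    s * (p * (n - 1)) * (1 - 4 / w) ≤ meanExtN n s p := by
  have hs' : (1 : ℝ) ≤ s := by exact_mod_cast hs
  have hn : 2 ≤ n := by nlinarith
  have hsd : s * (p * (n - 1)) ≤ 2 / w * (n - 1) := by
    rw [le_div_iff₀ (by positivity)] at hsw
    rw [div_mul_eq_mul_div, le_div_iff₀ hw]
    linarith
  have hs_le : s ≤ 2 / w * (n - 1) := by nlinarith
  have hsp : s * p ≤ 2 / w := le_of_mul_le_mul_right (by linarith) (by linarith : 0 < n - 1)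
  have hsp₀ : 0 ≤ s * p := by positivity
  calc s * (p * (n - 1)) * (1 - 4 / w)
      = s * (p * (n - 1)) - 2 / w * (n - 1) * (s * p) - (n - 1) * (s * p) * (2 / w) := by ring
    _ ≤ s * (p * (n - 1)) - s * (s * p) - (n - 1) * (s * p) * (s * p) := by
        gcongr
        exact mul_nonneg (by linarith) hsp₀
    _ = s * (p * (n - 1)) - s * (s * p) - (n - 1) * (s * p) ^ 2 := by ring
    _ ≤ meanExtN n s p := le_meanExtN hp₀ hp₁ hs hsn

end Mean

section Expansion

lemma sum_pow_card_erase_empty {V : Type*} [Fintype V] [DecidableEq V] (x : ℝ) :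
    ∑ S ∈ (univ : Finset (Finset V)).erase ∅, x ^ #S = (x + 1) ^ Fintype.card V - 1 := by
  have h := Fintype.sum_pow_mul_eq_add_pow V x 1
  rw [← add_sum_erase _ _ (mem_univ ∅)] at h
  simp only [one_pow, mul_one, card_empty, pow_zero] at h
  linarith

lemma add_one_pow_sub_one_le {x : ℝ} (hx : 0 ≤ x) (n : ℕ) (hnx : n * x ≤ 1) :
    (x + 1) ^ n - 1 ≤ 2 * (n * x) := by
  have hpos : 0 ≤ n * x := by positivity
  have hexp : |exp (n * x) - 1| ≤ 2 * |n * x| :=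
    abs_exp_sub_one_le (by rwa [abs_of_nonneg hpos])
  calc (x + 1) ^ n - 1 ≤ exp x ^ n - 1 := by gcongr; exact add_one_le_exp x
    _ = exp (n * x) - 1 := by rw [exp_nat_mul]
    _ ≤ 2 * (n * x) := by rw [abs_of_nonneg hpos] at hexp; exact (le_abs_self _).trans hexp

variable {V : Type*} [Fintype V] [DecidableEq V]

/-- Every set `S` of at most `|V| / (d * w)` vertices of `G` satisfies
`|N(S)| = |S| * d * (1 + O(w ^ (-1 / 2)))` with implied constant `C`. -/
def IsExpanding (G : SimpleGraph V) (d w C : ℝ) : Prop :=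
  ∀ S : Finset V, (#S : ℝ) ≤ Fintype.card V / (d * w) →
    |(#(extN G S) : ℝ) - #S * d| ≤ C * (#S * d) / √w

variable {p : I} {w : ℝ}

lemma binomialRandom_real_lt_abs_card_extN_sub_le {S : Finset V} (hS : S.Nonempty)
    (hw : 1 ≤ w) (hd : 1 ≤ p * (Fintype.card V - 1 : ℝ))
    (hSw : (#S : ℝ) ≤ Fintype.card V / (p * (Fintype.card V - 1) * w)) (C : ℝ) :
    G(V, p).real {G | C * (#S * (p * (Fintype.card V - 1))) / √w <
      |(#(extN G S) : ℝ) - #S * (p * (Fintype.card V - 1))|} ≤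
        2 * exp (-((C - 2) * (#S * (p * (Fintype.card V - 1)) / w))) := by
  have hw₀ : 0 < w := by linarith
  have hs : 1 ≤ #S := hS.card_pos
  have hsn : (#S : ℝ) ≤ Fintype.card V := by exact_mod_cast card_le_univ S
  have hsq : ((√w)⁻¹) ^ 2 = w⁻¹ := by rw [inv_pow, sq_sqrt hw₀.le]
  have hlower := mul_one_sub_le_meanExtN p.2.1 p.2.2 hs hsn hw₀ hd hSw
  have htail := (hasSubPoissonMGF_card_extN p S).measureReal_lt_abs_sub_le
    (meanExtN_nonneg p.2.1 p.2.2 hsn) (meanExtN_le p.2.1 p.2.2 hs hsn)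
    (by rwa [hsq, ← div_eq_mul_inv]) (inv_nonneg.2 (sqrt_nonneg w))
    (inv_le_one_of_one_le₀ (one_le_sqrt.2 hw)) C
  simpa only [hsq, inv_mul_eq_div, mul_div_assoc'] using htail

lemma binomialRandom_real_not_isExpanding_le (hw : 1 ≤ w)
    (hd : 1 ≤ p * (Fintype.card V - 1 : ℝ)) (C : ℝ) :
    G(V, p).real {G | ¬ IsExpanding G (p * (Fintype.card V - 1)) w C} ≤
      2 * ((exp (-((C - 2) * (p * (Fintype.card V - 1) / w))) + 1) ^ Fintype.card V - 1) := by
  set n := (Fintype.card V : ℝ)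
  let deviates (S : Finset V) : Set (SimpleGraph V) :=
    {G | C * (#S * (p * (n - 1))) / √w < |(#(extN G S) : ℝ) - #S * (p * (n - 1))|}
  let small := (univ.erase ∅).filter fun S : Finset V ↦ (#S : ℝ) ≤ n / (p * (n - 1) * w)
  have hsub : {G : SimpleGraph V | ¬ IsExpanding G (p * (n - 1)) w C} ⊆
      ⋃ S ∈ small, deviates S := by
    intro G hG
    simp only [IsExpanding, Set.mem_ofPred_eq, not_forall, not_le] at hG
    obtain ⟨S, hSw, hS⟩ := hG
    have hne : S ≠ ∅ := by
      rintro rfl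
      simp [extN] at hS
    exact Set.mem_biUnion (mem_filter.2 ⟨mem_erase.2 ⟨hne, mem_univ S⟩, hSw⟩) hS
  calc G(V, p).real {G | ¬ IsExpanding G (p * (n - 1)) w C}
      ≤ ∑ S ∈ small, G(V, p).real (deviates S) :=
        (measureReal_mono hsub (measure_ne_top _ _)).trans (measureReal_biUnion_finset_le _ _)
    _ ≤ ∑ S ∈ small, 2 * exp (-((C - 2) * (#S * (p * (n - 1)) / w))) := by
        refine sum_le_sum fun S hS ↦ ?_
        obtain ⟨hS, hSw⟩ := mem_filter.1 hS
        exact binomialRandom_real_lt_abs_card_extN_sub_le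
          (nonempty_iff_ne_empty.2 (ne_of_mem_erase hS)) hw hd hSw C
    _ ≤ ∑ S ∈ univ.erase ∅, 2 * exp (-((C - 2) * (#S * (p * (n - 1)) / w))) :=
        sum_le_sum_of_subset_of_nonneg (filter_subset _ _) fun _ _ _ ↦ by positivity
    _ = 2 * ((exp (-((C - 2) * (p * (n - 1) / w))) + 1) ^ Fintype.card V - 1) := by
        rw [← sum_pow_card_erase_empty, mul_sum]
        refine sum_congr rfl fun S _ ↦ ?_
        rw [← exp_nat_mul]
        ring_nf

lemma one_sub_le_binomialRandom_real_isExpanding (hn : 3 ≤ Fintype.card V) (hw : 1 ≤ w)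
    (hd : w * log (Fintype.card V) ≤ p * (Fintype.card V - 1)) :
    1 - 4 / (Fintype.card V : ℝ) ≤
      G(V, p).real {G | IsExpanding G (p * (Fintype.card V - 1)) w 4} := by
  set n := (Fintype.card V : ℝ) with hn_def
  have hn' : 3 ≤ n := by rw [hn_def]; exact_mod_cast hn
  have hlog : 1 ≤ log n := (le_log_iff_exp_le (by linarith)).2 (exp_one_lt_three.le.trans hn')
  have hd₁ : 1 ≤ p * (n - 1) := by nlinarith
  have hexp : exp (-((4 - 2) * (p * (n - 1) / w))) ≤ (n ^ 2)⁻¹ := by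
    have hlog_le : log n ≤ p * (n - 1) / w := (le_div_iff₀' (by linarith)).2 hd
    calc exp (-((4 - 2) * (p * (n - 1) / w))) ≤ exp (-log (n ^ 2)) := by
          rw [log_pow]; gcongr; norm_num
      _ = (n ^ 2)⁻¹ := by rw [exp_neg, exp_log (by positivity)]
  have hmul : n * (n ^ 2)⁻¹ = n⁻¹ := by field_simp
  have hfail : G(V, p).real {G | ¬ IsExpanding G (p * (n - 1)) w 4} ≤ 4 / n :=
    calc G(V, p).real {G | ¬ IsExpanding G (p * (n - 1)) w 4}
        ≤ 2 * ((exp (-((4 - 2) * (p * (n - 1) / w))) + 1) ^ Fintype.card V - 1) :=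
          binomialRandom_real_not_isExpanding_le hw hd₁ 4
      _ ≤ 2 * (((n ^ 2)⁻¹ + 1) ^ Fintype.card V - 1) := by gcongr
      _ ≤ 2 * (2 * (n * (n ^ 2)⁻¹)) := by
          gcongr
          exact add_one_pow_sub_one_le (by positivity) _
            (hmul.trans_le (inv_le_one_of_one_le₀ (by linarith)))
      _ = 4 / n := by rw [hmul]; ring
  have hcompl := probReal_compl_eq_one_sub (μ := G(V, p))
    (.of_discrete : MeasurableSet {G | IsExpanding G (p * (n - 1)) w 4})
  rw [Set.compl_ofPred] at hcompl
  linarith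

end Expansion

end PZF

theorem er_expansion_general (p ω : ℕ → ℝ) (hp : ∀ n, 0 ≤ p n ∧ p n ≤ 1)
    (hω : ∀ᶠ n in atTop, 1 ≤ ω n) (hd : ∀ᶠ n in atTop, ω n * log n ≤ p n * ((n : ℝ) - 1)) :
    Tendsto (fun n ↦ PZF.graphProb n (p n) fun G ↦
      PZF.IsExpanding G (p n * ((n : ℝ) - 1)) (ω n) 4) atTop (nhds 1) := by
  lift p to ℕ → unitInterval using hp
  have hlim : Tendsto (fun n : ℕ ↦ 1 - 4 / (n : ℝ)) atTop (nhds 1) := by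
    simpa using (tendsto_const_div_atTop_nhds_zero_nat (4 : ℝ)).const_sub 1
  simp_rw [PZF.graphProb_eq_binomialRandom_real]
  refine tendsto_of_tendsto_of_tendsto_of_le_of_le' hlim tendsto_const_nhds ?_
    (.of_forall fun n ↦ MeasureTheory.measureReal_le_one)
  filter_upwards [eventually_ge_atTop 3, hω, hd] with n hn hωn hdn
  have hfin := PZF.one_sub_le_binomialRandom_real_isExpanding (V := Fin n) (p := p n) (w := ω n)
  simp only [Fintype.card_fin] at hfin
  exact hfin hn hωn hdn

/-- If `ω → ∞` and `d = p (n - 1) ≥ ω log n`, then a.a.s. every set `S` of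
at most `n / (d ω)` vertices of `G(n,p)` satisfies `|N(S)| = s d (1 + O(ω^{-1/2}))`, with an
absolute implied constant (independent of `S` and of `n`). -/
theorem er_expansion
    (p ω : ℕ → ℝ) (hp : ∀ n, 0 ≤ p n ∧ p n ≤ 1)
    (hω : Tendsto ω atTop atTop)
    (hd : ∀ᶠ n in atTop, ω n * Real.log n ≤ p n * ((n : ℝ) - 1)) :
    ∃ C : ℝ, 0 < C ∧
      Tendsto
        (fun n => PZF.graphProb n (p n) fun G =>
          ∀ S : Finset (Fin n),
            (S.card : ℝ) ≤ (n : ℝ) / (p n * ((n : ℝ) - 1) * ω n) →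
            |((PZF.extN G S).card : ℝ) - (S.card : ℝ) * (p n * ((n : ℝ) - 1))| ≤
              C * ((S.card : ℝ) * (p n * ((n : ℝ) - 1))) / Real.sqrt (ω n))
        atTop (nhds 1) := by
  refine ⟨4, by norm_num, ?_⟩
  simpa only [PZF.IsExpanding, Fintype.card_fin] using
    er_expansion_general p ω hp (hω.eventually_ge_atTop 1) hd
end

section
/- Suppose that p = p(n) ≥ 1/log² n. Then asymptotically almost surely pt_pzf(G(n,p)) ≥ (1+o(1)) log₂ log₂ n, where pt_pzf(G(n,p)) = min over all vertices v of pt_pzf(G(n,p), v), the minimum being taken over n independent runs of probabilistic zero forcing, one started from each vertex. -/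
open Finset Filter Real
open scoped Classical

namespace PZF

variable {V : Type*} [Fintype V] [DecidableEq V]

/-- `P(pt_pzf(G(n,p)) ≤ ℓ)` where `pt_pzf(G(n,p)) = min_v pt_pzf(G(n,p), v)`, the minimum
taken over `n` independent runs of probabilistic zero forcing, one started from each vertex:
given the graph `G`, the `n` runs are independent, so the minimum exceeds `ℓ` with
probability `∏_v (1 - P(pt_pzf(G, v) ≤ ℓ))`. -/
noncomputable def prMinPZFwithin (n : ℕ) (p : ℝ) (ℓ : ℕ) : ℝ :=
  ∑ G : SimpleGraph (Fin n),
    erProb n p G * (1 - ∏ v : Fin n, (1 - probAllBlue G {v} ℓ))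

end PZF

/-!
If `b` vertices are blue, each of them forces at most `b` white neighbours in expectation, since its
success probability per neighbour is at most `b / deg`. A round therefore creates at most `b ^ 2`
new blue vertices in expectation, whatever the graph. As white vertices turn blue independently,
the exponential moment of the new number of blue vertices is at most `exp (3 * b ^ 2)`, so for
`b ≤ M` this number exceeds `4 * M ^ 2` with probability at most `exp (-M ^ 2)`. Starting from
`M = log₂ n` the quantity `4 * M` is squared in each round, so that
`(1 + o(1)) * log₂ (log₂ n)` rounds are needed except with probability `o(1 / n)`, which survives
a union bound over the `n` starting vertices. Averaging over the graph preserves the bound.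
-/

namespace PZF

section UnionProb

variable {ι : Type*} {s : Finset ι} {a : ι → ℝ}

/-- The probability that at least one of independent events occurs, where the event with index
`i ∈ s` has probability `a i`. -/
noncomputable def unionProb (s : Finset ι) (a : ι → ℝ) : ℝ :=
  1 - ∏ i ∈ s, (1 - a i)

lemma prod_one_sub_mem_Icc (ha : ∀ i ∈ s, a i ∈ Set.Icc (0 : ℝ) 1) :
    ∏ i ∈ s, (1 - a i) ∈ Set.Icc (0 : ℝ) 1 :=
  ⟨prod_nonneg fun i hi => sub_nonneg.2 (ha i hi).2,
    prod_le_one (fun i hi => sub_nonneg.2 (ha i hi).2) fun i hi => sub_le_self 1 (ha i hi).1⟩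

lemma unionProb_mem_Icc (ha : ∀ i ∈ s, a i ∈ Set.Icc (0 : ℝ) 1) :
    unionProb s a ∈ Set.Icc (0 : ℝ) 1 :=
  have h := prod_one_sub_mem_Icc ha
  ⟨sub_nonneg.2 h.2, sub_le_self 1 h.1⟩

lemma unionProb_le_sum (ha : ∀ i ∈ s, a i ∈ Set.Icc (0 : ℝ) 1) :
    unionProb s a ≤ ∑ i ∈ s, a i := by
  induction s using Finset.cons_induction with
  | empty => simp [unionProb]
  | cons j s hj ih =>
    rw [forall_mem_cons] at ha
    have hprod : ∏ i ∈ s, (1 - a i) ≤ 1 := (prod_one_sub_mem_Icc ha.2).2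
    calc unionProb (cons j s hj) a = a j * ∏ i ∈ s, (1 - a i) + unionProb s a := by
          rw [unionProb, unionProb, prod_cons]; ring
      _ ≤ a j + ∑ i ∈ s, a i := add_le_add (mul_le_of_le_one_right ha.1.1 hprod) (ih ha.2)
      _ = ∑ i ∈ cons j s hj, a i := (sum_cons hj).symm

end UnionProb

section OneRound

variable {V : Type*} [Fintype V] [DecidableEq V] {q : V → V → ℝ}

lemma stepOfQ_nonneg (hq : ∀ u v, q u v ∈ Set.Icc (0 : ℝ) 1) (B B' : Finset V) :
    0 ≤ stepOfQ q B B' := by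
  unfold stepOfQ
  split_ifs
  · have hstay (v : V) := prod_one_sub_mem_Icc (s := B) fun u _ => hq u v
    exact mul_nonneg (prod_nonneg fun v _ => sub_nonneg.2 (hstay v).2)
      (prod_nonneg fun v _ => (hstay v).1)
  · exact le_rfl

/-- The number of newly forced vertices is a sum of independent Bernoulli variables, one for each
white vertex, so its generating function factorises. -/
lemma sum_stepOfQ_mul_pow_card_sdiff (q : V → V → ℝ) (B : Finset V) (t : ℝ) :
    ∑ B', stepOfQ q B B' * t ^ #(B' \ B) = ∏ v ∈ Bᶜ, (1 + (t - 1) * unionProb B (q · v)) := by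
  have hfactor (v : V) : 1 + (t - 1) * unionProb B (q · v) =
      t * unionProb B (q · v) + ∏ u ∈ B, (1 - q u v) := by
    rw [unionProb]; ring
  simp only [stepOfQ, ite_mul, zero_mul, ← sum_filter, hfactor, prod_add]
  refine sum_nbij' (· \ B) (B ∪ ·) ?_ ?_ ?_ ?_ fun B' hB' => ?_
  · intro B' _
    simp [sdiff_eq_inter_compl, inter_subset_right]
  · simp
  · intro B' hB'
    exact union_sdiff_of_subset (mem_filter.1 hB').2
  · intro A hA
    exact union_sdiff_cancel_left (disjoint_compl_right.mono_right (mem_powerset.1 hA))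
  · have hwhite : Bᶜ \ (B' \ B) = B'ᶜ := by
      have hsub : B ⊆ B' := (mem_filter.1 hB').2
      grind [mem_compl]
    rw [hwhite, prod_mul_distrib, prod_const]
    simp only [unionProb]
    ring

lemma stepOfQ_mem_stdSimplex (hq : ∀ u v, q u v ∈ Set.Icc (0 : ℝ) 1) (B : Finset V) :
    stepOfQ q B ∈ stdSimplex ℝ (Finset V) :=
  ⟨stepOfQ_nonneg hq B, by simpa using sum_stepOfQ_mul_pow_card_sdiff q B 1⟩

lemma sum_stepOfQ_mul_pow_card_sdiff_le (hq : ∀ u v, q u v ∈ Set.Icc (0 : ℝ) 1) (B : Finset V)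
    {t : ℝ} (ht : 1 ≤ t) :
    ∑ B', stepOfQ q B B' * t ^ #(B' \ B) ≤ exp ((t - 1) * ∑ v ∈ Bᶜ, unionProb B (q · v)) := by
  rw [sum_stepOfQ_mul_pow_card_sdiff, mul_sum]
  refine prod_one_add_le_exp_sum Bᶜ fun v => ?_
  exact mul_nonneg (sub_nonneg.2 ht) (unionProb_mem_Icc fun u _ => hq u v).1

end OneRound

section Forcing

variable {V : Type*} {G : SimpleGraph V} {B : Finset V}

lemma closedDegIn_le_card (G : SimpleGraph V) (B : Finset V) (u : V) :
    closedDegIn G B u ≤ #B :=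
  (Set.ncard_le_ncard Set.inter_subset_right B.finite_toSet).trans_eq (Set.ncard_coe_finset B)

lemma closedDegIn_le_deg [Finite V] {u v : V} (huv : G.Adj u v) (hv : v ∉ B) :
    closedDegIn G B u ≤ deg G u := by
  have hsub : insert u (G.neighborSet u) ∩ B ⊆ insert u (G.neighborSet u \ {v}) := by
    rintro w ⟨rfl | huw, hw⟩
    · exact Set.mem_insert w _
    · exact Set.mem_insert_of_mem u ⟨huw, fun hwv => hv (hwv ▸ hw)⟩
  calc closedDegIn G B u ≤ (insert u (G.neighborSet u \ {v})).ncard := Set.ncard_le_ncard hsub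
    _ ≤ (G.neighborSet u \ {v}).ncard + 1 := Set.ncard_insert_le u _
    _ = deg G u := Set.ncard_sdiff_singleton_add_one huv

variable [DecidableEq V]

lemma edgeForceProb_mem_Icc [Finite V] (G : SimpleGraph V) (B : Finset V) (u v : V) :
    edgeForceProb G B u v ∈ Set.Icc (0 : ℝ) 1 := by
  unfold edgeForceProb
  split_ifs with h
  · exact ⟨by positivity, div_le_one_of_le₀ (mod_cast closedDegIn_le_deg h.1 h.2.2)
      (Nat.cast_nonneg _)⟩
  · exact ⟨le_rfl, zero_le_one⟩

variable [Fintype V]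

lemma sum_edgeForceProb_le_card (G : SimpleGraph V) (B : Finset V) (u : V) :
    ∑ v, edgeForceProb G B u v ≤ #B := by
  have hedge (v : V) : edgeForceProb G B u v ≤
      if G.Adj u v then (closedDegIn G B u : ℝ) / deg G u else 0 := by
    unfold edgeForceProb
    split_ifs with hforce hadj hadj
    · exact le_rfl
    · exact absurd hforce.1 hadj
    · positivity
    · exact le_rfl
  have hdeg : #{v | G.Adj u v} = deg G u := by
    rw [deg, ← Set.ncard_coe_finset, coe_filter_univ]
    rfl
  calc ∑ v, edgeForceProb G B u v
      ≤ ∑ v, if G.Adj u v then (closedDegIn G B u : ℝ) / deg G u else 0 :=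
        sum_le_sum fun v _ => hedge v
    _ = closedDegIn G B u * (deg G u / deg G u) := by
        rw [← sum_filter, sum_const, nsmul_eq_mul, hdeg, mul_div_left_comm]
    _ ≤ closedDegIn G B u := mul_le_of_le_one_right (Nat.cast_nonneg _) (div_self_le_one _)
    _ ≤ #B := mod_cast closedDegIn_le_card G B u

lemma sum_unionProb_edgeForceProb_le (G : SimpleGraph V) (B : Finset V) :
    ∑ v ∈ Bᶜ, unionProb B (edgeForceProb G B · v) ≤ (#B : ℝ) ^ 2 :=
  have hq := edgeForceProb_mem_Icc G B
  calc ∑ v ∈ Bᶜ, unionProb B (edgeForceProb G B · v)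
      ≤ ∑ v, unionProb B (edgeForceProb G B · v) :=
        sum_le_univ_sum_of_nonneg fun v => (unionProb_mem_Icc fun u _ => hq u v).1
    _ ≤ ∑ v, ∑ u ∈ B, edgeForceProb G B u v :=
        sum_le_sum fun v _ => unionProb_le_sum fun u _ => hq u v
    _ = ∑ u ∈ B, ∑ v, edgeForceProb G B u v := sum_comm
    _ ≤ ∑ _u ∈ B, (#B : ℝ) := sum_le_sum fun u _ => sum_edgeForceProb_le_card G B u
    _ = (#B : ℝ) ^ 2 := by rw [sum_const, nsmul_eq_mul, sq]

lemma sum_stepOfQ_edgeForceProb_mul_exp_card_le (G : SimpleGraph V) (B : Finset V) :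
    ∑ B', stepOfQ (edgeForceProb G B) B B' * exp #B' ≤ exp (3 * (#B : ℝ) ^ 2) := by
  have hq := edgeForceProb_mem_Icc G B
  have hexp (B' : Finset V) : exp #B' ≤ exp 1 ^ #(B' \ B) * exp #B := by
    have hcard : #B' ≤ #(B' \ B) + #B := card_le_card_sdiff_add_card
    rw [← exp_nat_mul, mul_one, ← exp_add, exp_le_exp]
    exact_mod_cast hcard
  have hB : (#B : ℝ) ≤ (#B : ℝ) ^ 2 := mod_cast Nat.le_self_pow two_ne_zero #B
  calc ∑ B', stepOfQ (edgeForceProb G B) B B' * exp #B'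
      ≤ ∑ B', stepOfQ (edgeForceProb G B) B B' * (exp 1 ^ #(B' \ B) * exp #B) :=
        sum_le_sum fun B' _ => mul_le_mul_of_nonneg_left (hexp B') (stepOfQ_nonneg hq B B')
    _ = (∑ B', stepOfQ (edgeForceProb G B) B B' * exp 1 ^ #(B' \ B)) * exp #B := by
        simp only [sum_mul, mul_assoc]
    _ ≤ exp ((exp 1 - 1) * ∑ v ∈ Bᶜ, unionProb B (edgeForceProb G B · v)) * exp #B := by
        gcongr
        exact sum_stepOfQ_mul_pow_card_sdiff_le hq B (one_le_exp zero_le_one)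
    _ ≤ exp (3 * (#B : ℝ) ^ 2) := by
        rw [← exp_add, exp_le_exp]
        have hsum := sum_unionProb_edgeForceProb_le G B
        nlinarith [exp_one_lt_three, one_lt_exp_iff.2 one_pos]

/-- Markov's inequality for `exp |B'|`. -/
lemma sum_stepOfQ_edgeForceProb_card_gt_le (G : SimpleGraph V) (B : Finset V) (a : ℝ) :
    ∑ B' with a < #B', stepOfQ (edgeForceProb G B) B B' ≤ exp (3 * (#B : ℝ) ^ 2 - a) := by
  have hstep := stepOfQ_nonneg (edgeForceProb_mem_Icc G B) B
  calc ∑ B' with a < #B', stepOfQ (edgeForceProb G B) B B'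
      ≤ ∑ B' with a < #B', stepOfQ (edgeForceProb G B) B B' * exp (#B' - a) :=
        sum_le_sum fun B' hB' => le_mul_of_one_le_right (hstep B') <|
          one_le_exp (sub_nonneg.2 (mem_filter.1 hB').2.le)
    _ ≤ ∑ B', stepOfQ (edgeForceProb G B) B B' * exp (#B' - a) :=
        sum_le_univ_sum_of_nonneg fun B' => mul_nonneg (hstep B') (exp_pos _).le
    _ = (∑ B', stepOfQ (edgeForceProb G B) B B' * exp #B') * exp (-a) := by
        simp only [sub_eq_add_neg, exp_add, sum_mul, mul_assoc]
    _ ≤ exp (3 * (#B : ℝ) ^ 2 - a) := by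
        rw [sub_eq_add_neg, exp_add]
        gcongr
        exact sum_stepOfQ_edgeForceProb_mul_exp_card_le G B

end Forcing

section Propagation

variable {V : Type*} [Fintype V] [DecidableEq V]

lemma seqProbAux_stdStep_congr (G : SimpleGraph V) {h h' : List (Finset V)}
    (hlast : h.getLastD ∅ = h'.getLastD ∅) (l : List (Finset V)) :
    seqProbAux (stdStep G) h l = seqProbAux (stdStep G) h' l := by
  induction l generalizing h h' with
  | nil => rfl
  | cons B l ih =>
    have hstep : stdStep G h B = stdStep G h' B := by rw [stdStep, stdStep, hlast]
    rw [seqProbAux, seqProbAux, hstep,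
      ih (List.getLastD_concat.trans List.getLastD_concat.symm)]

lemma probForced_zero (G : SimpleGraph V) (S T : Finset V) :
    probForced G S T 0 = if T ⊆ S then 1 else 0 := by
  simp [probForced, trajEventProb, seqProbAux]

lemma probForced_succ (G : SimpleGraph V) (S T : Finset V) (ℓ : ℕ) :
    probForced G S T (ℓ + 1) =
      ∑ B, stepOfQ (edgeForceProb G S) S B * probForced G B T ℓ := by
  have hmarkov (B : Finset V) (l : List (Finset V)) :
      seqProbAux (stdStep G) [S, B] l = seqProbAux (stdStep G) [B] l :=
    seqProbAux_stdStep_congr (h := [S, B]) (h' := [B]) G rfl l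
  rw [probForced, trajEventProb, ← (Fin.consEquiv fun _ => Finset V).sum_comp,
    Fintype.sum_prod_type]
  refine sum_congr rfl fun B _ => ?_
  simp only [probForced, trajEventProb, mul_sum, mul_ite, mul_zero]
  refine sum_congr rfl fun f _ => ?_
  simp only [Fin.consEquiv_apply, List.ofFn_succ, Fin.cons_zero, Fin.cons_succ,
    List.getLastD_cons, seqProbAux, List.singleton_append, hmarkov]
  rfl

lemma probForced_mem_Icc (G : SimpleGraph V) (S T : Finset V) (ℓ : ℕ) :
    probForced G S T ℓ ∈ Set.Icc (0 : ℝ) 1 := by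
  induction ℓ generalizing S with
  | zero =>
    rw [probForced_zero]
    split_ifs <;> simp
  | succ ℓ ih =>
    have hstep := stepOfQ_mem_stdSimplex (edgeForceProb_mem_Icc G S) S
    rw [probForced_succ]
    exact (convex_Icc 0 1).sum_mem (fun B _ => hstep.1 B) hstep.2 fun B _ => ih B

/-- Passing from the bound `M` to `4 * M ^ 2` squares `4 * M`, whence the form of `hT`. -/
lemma probForced_le (G : SimpleGraph V) {S T : Finset V} {ℓ : ℕ} {M : ℝ} (hM : 1 ≤ M)
    (hS : #S ≤ M) (hT : (4 * M) ^ 2 ^ ℓ < 4 * #T) :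
    probForced G S T ℓ ≤ ℓ * exp (-M ^ 2) := by
  induction ℓ generalizing S M with
  | zero =>
    have hTS : ¬T ⊆ S := fun h => by
      have hcard : (#T : ℝ) ≤ #S := mod_cast card_le_card h
      rw [pow_zero, pow_one] at hT
      linarith
    simp [probForced_zero, hTS]
  | succ ℓ ih =>
    have hstep := stepOfQ_mem_stdSimplex (edgeForceProb_mem_Icc G S) S
    have hsmall {B : Finset V} (hB : #B ≤ 4 * M ^ 2) :
        probForced G B T ℓ ≤ ℓ * exp (-M ^ 2) := by
      have hpow : (4 * (4 * M ^ 2)) ^ 2 ^ ℓ = (4 * M) ^ 2 ^ (ℓ + 1) := by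
        rw [pow_succ' 2 ℓ, pow_mul]; ring
      refine (ih (by nlinarith) hB (hpow ▸ hT)).trans ?_
      gcongr
      nlinarith
    have hround (B : Finset V) : probForced G B T ℓ ≤
        ℓ * exp (-M ^ 2) + if 4 * M ^ 2 < #B then 1 else 0 := by
      split_ifs with hB
      · exact (probForced_mem_Icc G B T ℓ).2.trans (le_add_of_nonneg_left (by positivity))
      · exact (hsmall (not_lt.1 hB)).trans_eq (add_zero _).symm
    calc probForced G S T (ℓ + 1)
        = ∑ B, stepOfQ (edgeForceProb G S) S B * probForced G B T ℓ := probForced_succ G S T ℓ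
      _ ≤ ∑ B, stepOfQ (edgeForceProb G S) S B *
            (ℓ * exp (-M ^ 2) + if 4 * M ^ 2 < #B then 1 else 0) :=
          sum_le_sum fun B _ => mul_le_mul_of_nonneg_left (hround B) (hstep.1 B)
      _ = ℓ * exp (-M ^ 2) +
            ∑ B with 4 * M ^ 2 < (#B : ℝ), stepOfQ (edgeForceProb G S) S B := by
          simp only [mul_add, sum_add_distrib, ← sum_mul, hstep.2, one_mul, mul_ite, mul_one,
            mul_zero, sum_filter]
      _ ≤ ℓ * exp (-M ^ 2) + exp (3 * (#S : ℝ) ^ 2 - 4 * M ^ 2) := by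
          gcongr
          exact sum_stepOfQ_edgeForceProb_card_gt_le G S _
      _ ≤ ℓ * exp (-M ^ 2) + exp (-M ^ 2) := by
          gcongr
          nlinarith [pow_le_pow_left₀ (Nat.cast_nonneg _) hS 2]
      _ = (ℓ + 1 : ℕ) * exp (-M ^ 2) := by push_cast; ring

/-- The probability `P(min_v pt_pzf(G, v) ≤ ℓ)` for independent runs of probabilistic zero
forcing on `G`, one started from each vertex. -/
noncomputable def probMinAllBlue (G : SimpleGraph V) (ℓ : ℕ) : ℝ :=
  unionProb univ fun v => probAllBlue G {v} ℓ

lemma probMinAllBlue_nonneg (G : SimpleGraph V) (ℓ : ℕ) : 0 ≤ probMinAllBlue G ℓ :=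
  (unionProb_mem_Icc fun _ _ => probForced_mem_Icc G _ _ ℓ).1

lemma probMinAllBlue_le (G : SimpleGraph V) {ℓ : ℕ} {M : ℝ} (hM : 1 ≤ M)
    (hV : (4 * M) ^ 2 ^ ℓ < 4 * Fintype.card V) :
    probMinAllBlue G ℓ ≤ Fintype.card V * (ℓ * exp (-M ^ 2)) :=
  calc probMinAllBlue G ℓ ≤ ∑ v, probAllBlue G {v} ℓ :=
        unionProb_le_sum fun v _ => probForced_mem_Icc G {v} univ ℓ
    _ ≤ ∑ _v : V, ℓ * exp (-M ^ 2) :=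
        sum_le_sum fun v _ => probForced_le G hM (by simpa using hM) hV
    _ = Fintype.card V * (ℓ * exp (-M ^ 2)) := by simp

end Propagation

section RandomGraph

lemma erProb_mem_stdSimplex {n : ℕ} {p : ℝ} (hp : p ∈ Set.Icc (0 : ℝ) 1) :
    erProb n p ∈ stdSimplex ℝ (SimpleGraph (Fin n)) := by
  refine ⟨fun G => mul_nonneg (pow_nonneg hp.1 _) (pow_nonneg (sub_nonneg.2 hp.2) _), ?_⟩
  have hcard : #(⊤ : SimpleGraph (Fin n)).edgeFinset = n.choose 2 := by
    rw [SimpleGraph.card_edgeFinset_top_eq_card_choose_two, Fintype.card_fin]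
  calc ∑ G, erProb n p G
      = ∑ s ∈ (⊤ : SimpleGraph (Fin n)).edgeFinset.powerset,
          p ^ #s * (1 - p) ^ (n.choose 2 - #s) := by
        refine sum_nbij' (fun G => G.edgeFinset) (fun s => SimpleGraph.fromEdgeSet s)
          (fun G _ => ?_) (fun s _ => mem_univ _) (fun G _ => ?_) (fun s hs => ?_)
          (fun G _ => ?_)
        · exact mem_powerset.2 (SimpleGraph.edgeFinset_mono le_top)
        · simp
        · have hdiag : ∀ e ∈ s, ¬e.IsDiag := fun e he =>
            SimpleGraph.not_isDiag_of_mem_edgeFinset (mem_powerset.1 hs he)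
          ext e
          simpa using hdiag e
        · rw [erProb, ← SimpleGraph.coe_edgeFinset, Set.ncard_coe_finset]
    _ = 1 := by rw [← hcard, sum_pow_mul_eq_add_pow, add_sub_cancel, one_pow]

end RandomGraph

section SquaringTime

/-- The real number of squarings that lead from `4 * x` to `2 ^ x` when `1 ≤ x`, i.e. the solution
`t` of `(4 * x) ^ (2 ^ t) = 2 ^ x`. For `x = log₂ n` it bounds from below the
number of rounds in which `x` blue vertices typically become `2 ^ x = n`. -/
noncomputable def squaringTime (x : ℝ) : ℝ :=
  logb 2 (x / logb 2 (4 * x))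

lemma pow_two_pow_lt_of_lt_squaringTime {x : ℝ} {ℓ : ℕ} (hx : 1 ≤ x) (hℓ : ℓ < squaringTime x) :
    (4 * x) ^ 2 ^ ℓ < (2 : ℝ) ^ x := by
  have hlog : 0 < logb 2 (4 * x) := logb_pos one_lt_two (by linarith)
  rw [squaringTime, lt_logb_iff_rpow_lt one_lt_two (by positivity), lt_div_iff₀ hlog,
    rpow_natCast] at hℓ
  rw [← logb_lt_iff_lt_rpow one_lt_two (by positivity), logb_pow]
  exact_mod_cast hℓ

lemma isLittleO_logb_two_add_id : (fun y : ℝ => logb 2 (2 + y)) =o[atTop] (id : ℝ → ℝ) := by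
  have hshift : Tendsto (fun y : ℝ => 2 + y) atTop atTop :=
    tendsto_atTop_add_const_left atTop 2 tendsto_id
  have hlog : (fun y : ℝ => log (2 + y)) =o[atTop] fun y : ℝ => 2 + y :=
    isLittleO_log_id_atTop.comp_tendsto hshift
  have hlin : (fun y : ℝ => 2 + y) =O[atTop] (id : ℝ → ℝ) :=
    (Asymptotics.isLittleO_const_id_atTop 2).isBigO.add (Asymptotics.isBigO_refl id atTop)
  simpa only [logb, div_eq_inv_mul] using (hlog.trans_isBigO hlin).const_mul_left (log 2)⁻¹

lemma squaringTime_eq {x : ℝ} (hx : 1 ≤ x) :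
    squaringTime x = logb 2 x - logb 2 (2 + logb 2 x) := by
  have hfour : logb 2 4 = 2 := by
    rw [show (4 : ℝ) = 2 ^ 2 by norm_num, logb_pow, logb_self_eq_one one_lt_two]; norm_num
  have hlog : 0 ≤ logb 2 x := logb_nonneg one_lt_two hx
  rw [squaringTime, logb_mul four_ne_zero (by positivity), hfour,
    logb_div (by positivity) (by positivity)]

lemma tendsto_squaringTime_div_logb :
    Tendsto (fun x => squaringTime x / logb 2 x) atTop (nhds 1) := by
  have hlogb : Tendsto (logb 2) atTop atTop := tendsto_logb_atTop one_lt_two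
  have hlim := (isLittleO_logb_two_add_id.tendsto_div_nhds_zero.comp hlogb).const_sub 1
  rw [sub_zero] at hlim
  refine hlim.congr' ?_
  filter_upwards [eventually_ge_atTop 1, hlogb.eventually_ne_atTop 0] with x hx hlog
  rw [squaringTime_eq hx, sub_div, div_self hlog, Function.comp_apply, id_eq]

lemma eventually_natCeil_sub_one_lt_squaringTime :
    ∀ᶠ x : ℝ in atTop,
      ((⌈(1 + (squaringTime x / logb 2 x - 1)) * logb 2 x⌉₊ - 1 : ℕ) : ℝ) < squaringTime x := by
  filter_upwards [tendsto_squaringTime_div_logb.eventually_const_lt one_pos,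
    (tendsto_logb_atTop one_lt_two).eventually_gt_atTop 0] with x hratio hlog
  have hpos : 0 < squaringTime x := (div_pos_iff_of_pos_right hlog).1 hratio
  rw [add_sub_cancel, div_mul_cancel₀ _ hlog.ne']
  exact Nat.lt_ceil.1 (Nat.sub_one_lt (Nat.ceil_pos.2 hpos).ne')

end SquaringTime

lemma probMinAllBlue_le_mul_exp_neg {V : Type*} [Fintype V] [DecidableEq V] (G : SimpleGraph V)
    {x : ℝ} (hx : 2 ≤ x) (hV : Fintype.card V = (2 : ℝ) ^ x) {ℓ : ℕ} (hℓ : ℓ < squaringTime x) :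
    probMinAllBlue G ℓ ≤ x * exp (-x) := by
  have hpow := pow_two_pow_lt_of_lt_squaringTime (by linarith) hℓ
  have hℓx : (ℓ : ℝ) ≤ x := by
    have hlt : (2 : ℝ) ^ ((2 ^ ℓ : ℕ) : ℝ) < 2 ^ x := by
      rw [rpow_natCast]
      exact (pow_le_pow_left₀ zero_le_two (by linarith) _).trans_lt hpow
    have hℓ2 : (ℓ : ℝ) ≤ (2 ^ ℓ : ℕ) := mod_cast Nat.lt_two_pow_self.le
    exact hℓ2.trans ((rpow_lt_rpow_left_iff one_lt_two).1 hlt).le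
  have htwo : (2 : ℝ) ^ x ≤ exp x := by
    rw [← exp_one_rpow]
    exact rpow_le_rpow zero_le_two (by linarith [add_one_le_exp (1 : ℝ)]) (by linarith)
  calc probMinAllBlue G ℓ ≤ Fintype.card V * (ℓ * exp (-x ^ 2)) :=
        probMinAllBlue_le G (by linarith) (by rw [hV]; linarith [rpow_pos_of_pos two_pos x])
    _ ≤ exp x * (x * exp (-x ^ 2)) := by rw [hV]; gcongr
    _ = x * exp (x - x ^ 2) := by rw [sub_eq_add_neg, exp_add]; ring
    _ ≤ x * exp (-x) := by gcongr; nlinarith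

end PZF

theorem pzf_min_lower_bound_dense_general :
    ∃ e : ℕ → ℝ,
      Tendsto e atTop (nhds 0) ∧
      ∀ μ : ∀ n, SimpleGraph (Fin n) → ℝ, (∀ n, μ n ∈ stdSimplex ℝ (SimpleGraph (Fin n))) →
        Tendsto
          (fun n : ℕ => ∑ G, μ n G * PZF.probMinAllBlue G
            (⌈(1 + e n) * Real.logb 2 (Real.logb 2 n)⌉₊ - 1))
          atTop (nhds 0) := by
  have hlogb : Tendsto (fun n : ℕ => logb 2 n) atTop atTop :=
    (tendsto_logb_atTop one_lt_two).comp tendsto_natCast_atTop_atTop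
  have hbound : Tendsto (fun n : ℕ => logb 2 n * exp (-logb 2 n)) atTop (nhds 0) := by
    simpa [Function.comp_def] using (tendsto_pow_mul_exp_neg_atTop_nhds_zero 1).comp hlogb
  refine ⟨fun n => PZF.squaringTime (logb 2 n) / logb 2 (logb 2 n) - 1, ?_, fun μ hμ =>
    squeeze_zero' (.of_forall fun n => ?_) ?_ hbound⟩
  · simpa using (PZF.tendsto_squaringTime_div_logb.comp hlogb).sub_const 1
  · exact sum_nonneg fun G _ => mul_nonneg ((hμ n).1 G) (PZF.probMinAllBlue_nonneg G _)
  · filter_upwards [eventually_gt_atTop 0, hlogb.eventually_ge_atTop 2,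
      hlogb.eventually PZF.eventually_natCeil_sub_one_lt_squaringTime] with n hn hlog hlt
    have hcard : Fintype.card (Fin n) = (2 : ℝ) ^ logb 2 n := by
      rw [Fintype.card_fin, rpow_logb two_pos one_lt_two.ne' (Nat.cast_pos.2 hn)]
    exact (convex_Iic _).sum_mem (fun G _ => (hμ n).1 G) (hμ n).2 fun G _ =>
      Set.mem_Iic.2 (PZF.probMinAllBlue_le_mul_exp_neg G hlog hcard hlt)

/-- If `p n ≥ 1 / log² n`, then a.a.s.
`pt_pzf(G(n,p)) ≥ (1 + o(1)) log₂ log₂ n`, where `pt_pzf(G(n,p))` is the minimum over all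
vertices `v` of `pt_pzf(G(n,p), v)` for `n` independent runs, one started from each vertex. -/
theorem pzf_min_lower_bound_dense
    (p : ℕ → ℝ) (hp : ∀ n, 0 ≤ p n ∧ p n ≤ 1)
    (hplb : ∀ᶠ n : ℕ in atTop, 1 / Real.log n ^ 2 ≤ p n) :
    ∃ e : ℕ → ℝ,
      Tendsto e atTop (nhds 0) ∧
      Tendsto
        (fun n => PZF.prMinPZFwithin (n + 1) (p (n + 1))
          (⌈(1 + e n) * Real.logb 2 (Real.logb 2 ((n : ℝ) + 1))⌉₊ - 1))
        atTop (nhds 0) := by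
  obtain ⟨e, he, h⟩ := pzf_min_lower_bound_dense_general
  have hG := (h _ fun n => PZF.erProb_mem_stdSimplex (hp n)).comp (tendsto_add_atTop_nat 1)
  exact ⟨fun n => e (n + 1), he.comp (tendsto_add_atTop_nat 1), by exact_mod_cast hG⟩
end
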